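/- There exist universal constants c₁, c₂ > 0 such that the following holds for every dimension d: if f(x, y) is a log-concave joint probability density on ℝ^d × ℝ^d of a random pair (X, Y), with marginal densities f(x) := ∫ f(x, y) dy and f(y) := ∫ f(x, y) dx, then the information density satisfies P( | −log ( f(X,Y) / (f(X) f(Y)) ) − E[ −log ( f(X,Y) / (f(X) f(Y)) ) ] | > t ) ≤ 3 c₁ exp( −(c₂/3) min(t, t²/d) ) for all t ≥ 0, where the expectation E[−log(f(X,Y)/(f(X)f(Y)))] = I(X;Y) is the mutual information. -/

import Mathlib

open MeasureTheory Real
open Set Filter ProbabilityTheory Module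
open scoped ENNReal Pointwise Topology

/-!
The Prékopa–Leindler inequality implies Prékopa's theorem: the marginals of `exp (-W)` with `W`
convex are log-concave. Applied to the perspective `(a, x) ↦ a * V (a⁻¹ • x)` of a convex potential
`V` on an `n`-dimensional space it shows that `a ↦ n * log a + log ∫ exp (-a * V)` is concave on
`a > 0`. The tangent line of this function at `a = 1` bounds the moment generating function of
`V - E V` under the density `exp (-V)` by `exp (2 * n * β ^ 2)` for `β ≤ 1 / 2`, and Chernoff's
bound turns this into a concentration inequality for `V`. The information density is
`W (x, y) - U x - U' y` for the potential `W` of the joint density and the potentials `U`, `U'` of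
its marginals, which are convex by Prékopa's theorem, and a deviation of the information density
from its mean by `t` forces one of these three terms to deviate from its own mean by `t / 3`.
-/

lemma volume_add_volume_le_volume_add_of_isCompact {K L : Set ℝ} (hK : IsCompact K)
    (hL : IsCompact L) (hK₀ : K.Nonempty) (hL₀ : L.Nonempty) :
    volume K + volume L ≤ volume (K + L) := by
  obtain ⟨k, hkK, hk⟩ := hK.exists_isGreatest hK₀
  obtain ⟨l, hlL, hl⟩ := hL.exists_isLeast hL₀
  have hdisj : AEDisjoint volume (l +ᵥ K) (k +ᵥ L) := by
    refine measure_mono_null (t := {k + l}) ?_ (by simp)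
    rintro _ ⟨⟨x, hx, rfl⟩, y, hy, hxy⟩
    simp only [vadd_eq_add, mem_singleton_iff] at hxy ⊢
    linarith [hk hx, hl hy]
  calc volume K + volume L
      = volume (l +ᵥ K) + volume (k +ᵥ L) := by simp only [measure_vadd]
    _ = volume ((l +ᵥ K) ∪ (k +ᵥ L)) :=
        (measure_union₀ (hL.vadd k).measurableSet.nullMeasurableSet hdisj).symm
    _ ≤ volume (K + L) := by
        refine measure_mono (union_subset ?_ ?_)
        · rintro _ ⟨x, hx, rfl⟩
          simpa only [vadd_eq_add, add_comm] using add_mem_add hx hlL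
        · rintro _ ⟨y, hy, rfl⟩
          exact add_mem_add hkK hy

theorem volume_add_volume_le_volume_add {A B : Set ℝ} (hA : MeasurableSet A)
    (hB : MeasurableSet B) (hA₀ : A.Nonempty) (hB₀ : B.Nonempty) :
    volume A + volume B ≤ volume (A + B) := by
  obtain ⟨x, hx⟩ := hA₀
  obtain ⟨y, hy⟩ := hB₀
  rw [hA.measure_eq_iSup_isCompact, hB.measure_eq_iSup_isCompact]
  simp only [iSup_and']
  refine ENNReal.biSup_add_biSup_le (s := {K | K ⊆ A ∧ IsCompact K})
    (t := {L | L ⊆ B ∧ IsCompact L}) ⟨∅, by simp⟩ ⟨∅, by simp⟩ fun K hK L hL ↦ ?_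
  calc volume K + volume L
      ≤ volume (insert x K) + volume (insert y L) := by gcongr <;> exact subset_insert _ _
    _ ≤ volume (insert x K + insert y L) :=
        volume_add_volume_le_volume_add_of_isCompact (hK.2.insert x) (hL.2.insert y)
          (insert_nonempty _ _) (insert_nonempty _ _)
    _ ≤ volume (A + B) :=
        measure_mono (add_subset_add (insert_subset hx hK.1) (insert_subset hy hL.1))

lemma lintegral_min_one_eq_lintegral_meas_lt {α : Type*} [MeasurableSpace α] (μ : Measure α)
    {f : α → ℝ≥0∞} (hf : Measurable f) :
    ∫⁻ x, min (f x) 1 ∂μ = ∫⁻ t in Ioo (0 : ℝ) 1, μ {x | .ofReal t < f x} := by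
  have htop (x : α) : min (f x) 1 ≠ ∞ := (min_lt_of_right_lt ENNReal.one_lt_top).ne
  calc ∫⁻ x, min (f x) 1 ∂μ
      = ∫⁻ x, .ofReal (min (f x) 1).toReal ∂μ := by simp only [ENNReal.ofReal_toReal (htop _)]
    _ = ∫⁻ t in Ioi (0 : ℝ), μ {x | t < (min (f x) 1).toReal} :=
        lintegral_eq_lintegral_meas_lt μ (ae_of_all _ fun _ ↦ ENNReal.toReal_nonneg)
          (hf.min measurable_const).ennreal_toReal.aemeasurable
    _ = ∫⁻ t in Ioi (0 : ℝ), (Iio 1).indicator (fun t ↦ μ {x | .ofReal t < f x}) t := by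
        refine setLIntegral_congr_fun measurableSet_Ioi fun t ht ↦ ?_
        have hlevel : {x | t < (min (f x) 1).toReal} = {x | ENNReal.ofReal t < f x ∧ t < 1} := by
          ext x
          simp [← ENNReal.ofReal_lt_iff_lt_toReal (le_of_lt ht) (htop x)]
        by_cases ht1 : t < 1 <;> simp [hlevel, ht1]
    _ = ∫⁻ t in Ioo (0 : ℝ) 1, μ {x | .ofReal t < f x} := by
        rw [lintegral_indicator measurableSet_Iio, Measure.restrict_restrict measurableSet_Iio,
          inter_comm, Ioi_inter_Iio]

lemma ennreal_rpow_mul_rpow_le_add {a b : ℝ} (ha : 0 < a) (hb : 0 < b) (hab : a + b = 1)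
    (u v : ℝ≥0∞) : u ^ a * v ^ b ≤ .ofReal a * u + .ofReal b * v := by
  have hconj : (a⁻¹).HolderConjugate b⁻¹ :=
    Real.holderConjugate_iff.2 ⟨(one_lt_inv₀ ha).2 (by linarith), by simpa using hab⟩
  have h := ENNReal.young_inequality (u ^ a) (v ^ b) hconj
  rwa [ENNReal.rpow_rpow_inv ha.ne', ENNReal.rpow_rpow_inv hb.ne', ENNReal.ofReal_inv_of_pos ha,
    ENNReal.ofReal_inv_of_pos hb, ENNReal.div_eq_inv_mul, ENNReal.div_eq_inv_mul, inv_inv,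
    inv_inv] at h

lemma ofReal_mul_lintegral_add_le_lintegral {a b : ℝ} (ha : 0 < a) (hb : 0 < b) (hab : a + b = 1)
    {f g h : ℝ → ℝ≥0∞} (hf : Measurable f) (hg : Measurable g) (hh : Measurable h)
    (hf₁ : ⨆ x, f x = 1) (hg₁ : ⨆ x, g x = 1)
    (hfgh : ∀ x y, f x ^ a * g y ^ b ≤ h (a • x + b • y)) :
    .ofReal a * (∫⁻ x, f x) + .ofReal b * (∫⁻ x, g x) ≤ ∫⁻ x, h x := by
  have layer {u : ℝ → ℝ≥0∞} (hu : Measurable u) (hu₁ : ⨆ x, u x = 1) :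
      ∫⁻ x, u x = ∫⁻ t in Ioo (0 : ℝ) 1, volume {x | .ofReal t < u x} := by
    rw [← lintegral_min_one_eq_lintegral_meas_lt _ hu]
    simp only [fun x ↦ min_eq_left ((le_iSup u x).trans_eq hu₁)]
  have meas_layer (u : ℝ → ℝ≥0∞) : Measurable fun t : ℝ ↦ volume {x | .ofReal t < u x} :=
    Antitone.measurable fun s t hst ↦
      measure_mono fun x hx ↦ (ENNReal.ofReal_le_ofReal hst).trans_lt hx
  have nonempty_layer {u : ℝ → ℝ≥0∞} (hu₁ : ⨆ x, u x = 1) {t : ℝ} (ht : t < 1) :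
      {x | .ofReal t < u x}.Nonempty :=
    lt_iSup_iff.1 ((ENNReal.ofReal_lt_one.2 ht).trans_eq hu₁.symm)
  have volume_smul {c : ℝ} (hc : 0 < c) (s : Set ℝ) :
      volume (c • s) = .ofReal c * volume s := by
    simp [Measure.addHaar_smul, abs_of_pos hc]
  -- Brunn–Minkowski on the line applies because `a • {f > t} + b • {g > t} ⊆ {h > t}`, with both
  -- summands nonempty for `t < 1` thanks to the normalisation of the suprema.
  refine le_trans ?_ (lintegral_mono fun x ↦ min_le_left (h x) 1)
  rw [layer hf hf₁, layer hg hg₁, lintegral_min_one_eq_lintegral_meas_lt _ hh,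
    ← lintegral_const_mul _ (meas_layer f), ← lintegral_const_mul _ (meas_layer g),
    ← lintegral_add_left ((meas_layer f).const_mul _)]
  refine setLIntegral_mono' measurableSet_Ioo fun t ⟨_, ht₁⟩ ↦ ?_
  rw [← volume_smul ha, ← volume_smul hb]
  refine (volume_add_volume_le_volume_add
    ((measurableSet_lt measurable_const hf).const_smul₀ a)
    ((measurableSet_lt measurable_const hg).const_smul₀ b)
    (nonempty_layer hf₁ ht₁).smul_set (nonempty_layer hg₁ ht₁).smul_set).trans (measure_mono ?_)
  rintro _ ⟨_, ⟨x, hx, rfl⟩, _, ⟨y, hy, rfl⟩, rfl⟩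
  calc ENNReal.ofReal t = .ofReal t ^ a * .ofReal t ^ b := by
        rw [← ENNReal.rpow_add_of_nonneg _ _ ha.le hb.le, hab, ENNReal.rpow_one]
    _ < f x ^ a * g y ^ b :=
        ENNReal.mul_lt_mul (ENNReal.rpow_lt_rpow hx ha) (ENNReal.rpow_lt_rpow hy hb)
    _ ≤ h (a • x + b • y) := hfgh x y

/-- The Prékopa–Leindler inequality for the measure `μ`. Only non-trivial weights are considered,
and `h` is an arbitrary measurable majorant, since the supremal convolution of `f` and `g` need
not be measurable. -/
def PrekopaLeindler {E : Type*} [AddCommGroup E] [Module ℝ E] [MeasurableSpace E]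
    (μ : Measure E) : Prop :=
  ∀ ⦃a b : ℝ⦄, 0 < a → 0 < b → a + b = 1 → ∀ ⦃f g h : E → ℝ≥0∞⦄,
    Measurable f → Measurable g → Measurable h →
    (∀ x y, f x ^ a * g y ^ b ≤ h (a • x + b • y)) →
    (∫⁻ x, f x ∂μ) ^ a * (∫⁻ x, g x ∂μ) ^ b ≤ ∫⁻ x, h x ∂μ

lemma ennreal_div_rpow_mul_div_rpow {a b : ℝ} (ha : 0 ≤ a) (hb : 0 ≤ b) (u v : ℝ≥0∞)
    {F G : ℝ≥0∞} (hF₀ : F ≠ 0) (hF : F ≠ ∞) :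
    (u / F) ^ a * (v / G) ^ b = u ^ a * v ^ b / (F ^ a * G ^ b) := by
  rw [ENNReal.div_rpow_of_nonneg _ _ ha, ENNReal.div_rpow_of_nonneg _ _ hb]
  simp only [div_eq_mul_inv]
  rw [ENNReal.mul_inv (.inl (by simp [hF₀, hF])) (.inl (by simp [hF₀, hF]))]
  ring

lemma lintegral_rpow_mul_lintegral_rpow_le_of_iSup_ne_top {a b : ℝ} (ha : 0 < a) (hb : 0 < b)
    (hab : a + b = 1) {f g h : ℝ → ℝ≥0∞} (hf : Measurable f) (hg : Measurable g)
    (hh : Measurable h) (hf_top : ⨆ x, f x ≠ ∞) (hg_top : ⨆ x, g x ≠ ∞)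
    (hfgh : ∀ x y, f x ^ a * g y ^ b ≤ h (a • x + b • y)) :
    (∫⁻ x, f x) ^ a * (∫⁻ x, g x) ^ b ≤ ∫⁻ x, h x := by
  set F := ⨆ x, f x
  set G := ⨆ x, g x
  rcases eq_or_ne F 0 with hF₀ | hF₀
  · simp [ENNReal.iSup_eq_zero.1 hF₀, ha]
  rcases eq_or_ne G 0 with hG₀ | hG₀
  · simp [ENNReal.iSup_eq_zero.1 hG₀, hb]
  have hM₀ : F ^ a * G ^ b ≠ 0 := by simp [hF₀, hG₀, hf_top, hg_top]
  have hM_top : F ^ a * G ^ b ≠ ∞ := by finiteness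
  have hnorm := ofReal_mul_lintegral_add_le_lintegral ha hb hab (hf.div_const F) (hg.div_const G)
    (hh.div_const (F ^ a * G ^ b)) (by rw [← ENNReal.iSup_div, ENNReal.div_self hF₀ hf_top])
    (by rw [← ENNReal.iSup_div, ENNReal.div_self hG₀ hg_top]) fun x y ↦ by
      rw [ennreal_div_rpow_mul_div_rpow ha.le hb.le _ _ hF₀ hf_top]
      gcongr
      exact hfgh x y
  simp only [div_eq_mul_inv] at hnorm
  rw [lintegral_mul_const _ hf, lintegral_mul_const _ hg, lintegral_mul_const _ hh] at hnorm
  simp only [← div_eq_mul_inv] at hnorm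
  have hdiv := (ennreal_rpow_mul_rpow_le_add ha hb hab _ _).trans hnorm
  rwa [ennreal_div_rpow_mul_div_rpow ha.le hb.le _ _ hF₀ hf_top,
    ENNReal.div_le_iff hM₀ hM_top, ENNReal.div_mul_cancel hM₀ hM_top] at hdiv

lemma lintegral_rpow_eq_iSup_lintegral_min_rpow {α : Type*} [MeasurableSpace α] (μ : Measure α)
    {f : α → ℝ≥0∞} (hf : Measurable f) {c : ℝ} (hc : 0 < c) :
    (∫⁻ x, f x ∂μ) ^ c = ⨆ N : ℕ, (∫⁻ x, min (f x) N ∂μ) ^ c := by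
  have hsup : ∫⁻ x, f x ∂μ = ⨆ N : ℕ, ∫⁻ x, min (f x) N ∂μ := by
    rw [← lintegral_iSup (fun N ↦ hf.min measurable_const)
      fun m n hmn x ↦ min_le_min le_rfl (by exact_mod_cast hmn)]
    simp only [← inf_iSup_eq, ENNReal.iSup_natCast, inf_top_eq]
  rw [hsup]
  exact (ENNReal.orderIsoRpow c hc).map_iSup _

namespace PrekopaLeindler

theorem volume_real : PrekopaLeindler (volume : Measure ℝ) := by
  intro a b ha hb hab f g h hf hg hh hfgh
  have htrunc (N : ℕ) : (∫⁻ x, min (f x) N) ^ a * (∫⁻ x, min (g x) N) ^ b ≤ ∫⁻ x, h x := by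
    have min_ne_top (u : ℝ → ℝ≥0∞) : ⨆ x, min (u x) N ≠ ∞ :=
      ((iSup_le fun x ↦ min_le_right _ _).trans_lt (ENNReal.natCast_lt_top N)).ne
    refine lintegral_rpow_mul_lintegral_rpow_le_of_iSup_ne_top ha hb hab (hf.min measurable_const)
      (hg.min measurable_const) hh (min_ne_top f) (min_ne_top g) fun x y ↦ ?_
    refine le_trans ?_ (hfgh x y)
    gcongr <;> exact min_le_left _ _
  rw [lintegral_rpow_eq_iSup_lintegral_min_rpow _ hf ha,
    lintegral_rpow_eq_iSup_lintegral_min_rpow _ hg hb, ENNReal.iSup_mul]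
  simp only [ENNReal.mul_iSup]
  refine iSup₂_le fun m n ↦ le_trans ?_ (htrunc (max m n))
  gcongr <;> simp

variable {E F : Type*} [AddCommGroup E] [Module ℝ E] [MeasurableSpace E]
  [AddCommGroup F] [Module ℝ F] [MeasurableSpace F] {μ : Measure E} {ν : Measure F}

theorem prod [SFinite ν] (hμ : PrekopaLeindler μ) (hν : PrekopaLeindler ν) :
    PrekopaLeindler (μ.prod ν) := by
  intro a b ha hb hab f g h hf hg hh hfgh
  rw [lintegral_prod _ hf.aemeasurable, lintegral_prod _ hg.aemeasurable,
    lintegral_prod _ hh.aemeasurable]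
  refine hμ ha hb hab hf.lintegral_prod_right' hg.lintegral_prod_right' hh.lintegral_prod_right'
    fun x x' ↦ ?_
  exact hν ha hb hab (hf.comp measurable_prodMk_left) (hg.comp measurable_prodMk_left)
    (hh.comp measurable_prodMk_left) fun y y' ↦ hfgh (x, y) (x', y')

theorem map (hμ : PrekopaLeindler μ) (φ : E →ₗ[ℝ] F) (hφ : Measurable φ) :
    PrekopaLeindler (μ.map φ) := by
  intro a b ha hb hab f g h hf hg hh hfgh
  rw [lintegral_map hf hφ, lintegral_map hg hφ, lintegral_map hh hφ]
  refine hμ ha hb hab (hf.comp hφ) (hg.comp hφ) (hh.comp hφ) fun x y ↦ ?_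
  simpa using hfgh (φ x) (φ y)

theorem smul (hμ : PrekopaLeindler μ) (c : ℝ≥0∞) : PrekopaLeindler (c • μ) := by
  intro a b ha hb hab f g h hf hg hh hfgh
  simp only [lintegral_smul_measure, smul_eq_mul]
  calc (c * ∫⁻ x, f x ∂μ) ^ a * (c * ∫⁻ x, g x ∂μ) ^ b
      = c ^ (a + b) * ((∫⁻ x, f x ∂μ) ^ a * (∫⁻ x, g x ∂μ) ^ b) := by
        rw [ENNReal.mul_rpow_of_nonneg _ _ ha.le, ENNReal.mul_rpow_of_nonneg _ _ hb.le,
          ENNReal.rpow_add_of_nonneg _ _ ha.le hb.le]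
        ring
    _ ≤ c * ∫⁻ x, h x ∂μ := by
        rw [hab, ENNReal.rpow_one]
        gcongr
        exact hμ ha hb hab hf hg hh hfgh

theorem volume_pi (n : ℕ) : PrekopaLeindler (volume : Measure (Fin n → ℝ)) := by
  induction n with
  | zero =>
    intro a b _ _ _ f g h hf hg hh hfgh
    rw [MeasureTheory.volume_pi, Measure.pi_of_empty (x := 0), lintegral_dirac' _ hf,
      lintegral_dirac' _ hg, lintegral_dirac' _ hh]
    simpa using hfgh 0 0
  | succ n ih =>
    have hcons := (volume_preserving_piFinSuccAbove (fun _ : Fin (n + 1) ↦ ℝ) 0).symm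
    let cons : ℝ × (Fin n → ℝ) →ₗ[ℝ] (Fin (n + 1) → ℝ) :=
      (Fin.consLinearEquiv ℝ fun _ ↦ ℝ).toLinearMap
    have cons_eq : ⇑cons = (MeasurableEquiv.piFinSuccAbove (fun _ : Fin (n + 1) ↦ ℝ) 0).symm := by
      ext p i
      cases i using Fin.cases <;> simp [cons, MeasurableEquiv.piFinSuccAbove]
    rw [← hcons.map_eq, ← cons_eq]
    exact (volume_real.prod ih).map cons (cons_eq ▸ hcons.measurable)

theorem of_isAddHaarMeasure {E : Type*} [NormedAddCommGroup E] [NormedSpace ℝ E]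
    [FiniteDimensional ℝ E] [MeasurableSpace E] [BorelSpace E] (μ : Measure E)
    [μ.IsAddHaarMeasure] : PrekopaLeindler μ := by
  let e : E ≃L[ℝ] (Fin (finrank ℝ E) → ℝ) := .ofFinrankEq (by simp)
  have := e.isAddHaarMeasure_map μ
  have he : (μ.map e).map e.symm = μ := by
    rw [Measure.map_map e.symm.continuous.measurable e.continuous.measurable]
    simp
  have hmap : PrekopaLeindler (μ.map e) := by
    rw [Measure.isAddLeftInvariant_eq_smul (μ.map e) volume]
    exact (volume_pi _).smul _
  exact he ▸ hmap.map e.symm.toLinearMap e.symm.continuous.measurable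

end PrekopaLeindler

/-- Minus the logarithm of the marginal in the first variable of the density `exp (-W)` with respect
to a product measure with second factor `ν`. -/
noncomputable def marginalPotential {α β : Type*} [MeasurableSpace β] (ν : Measure β)
    (W : α × β → ℝ) (x : α) : ℝ :=
  -log (∫ y, exp (-W (x, y)) ∂ν)

section Prekopa

variable {E F : Type*} [AddCommGroup E] [Module ℝ E] [NormedAddCommGroup F] [NormedSpace ℝ F]
  {s : Set E} {W : E × F → ℝ} {x z : E}

lemma convexOn_slice (hW : ConvexOn ℝ (s ×ˢ univ) W) (hx : x ∈ s) :
    ConvexOn ℝ univ fun y ↦ W (x, y) := by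
  refine ⟨convex_univ, fun y _ y' _ a b ha hb hab ↦ ?_⟩
  simpa [← add_smul, hab] using
    hW.2 (mk_mem_prod hx (mem_univ y)) (mk_mem_prod hx (mem_univ y')) ha hb hab

variable [FiniteDimensional ℝ F] [MeasurableSpace F] [BorelSpace F] {ν : Measure F}

lemma measurable_of_convexOn_univ {V : F → ℝ} (hV : ConvexOn ℝ univ V) : Measurable V :=
  hV.locallyLipschitz.continuous.measurable

lemma measurable_neg_slice (hW : ConvexOn ℝ (s ×ˢ univ) W) (hx : x ∈ s) :
    Measurable fun y ↦ -W (x, y) :=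
  (measurable_of_convexOn_univ (convexOn_slice hW hx)).neg

lemma PrekopaLeindler.lintegral_exp_neg_rpow_mul_le (hν : PrekopaLeindler ν)
    (hW : ConvexOn ℝ (s ×ˢ univ) W) (hs : Convex ℝ s) (hx : x ∈ s) (hz : z ∈ s) {a b : ℝ}
    (ha : 0 < a) (hb : 0 < b) (hab : a + b = 1) :
    (∫⁻ y, .ofReal (exp (-W (x, y))) ∂ν) ^ a * (∫⁻ y, .ofReal (exp (-W (z, y))) ∂ν) ^ b
      ≤ ∫⁻ y, .ofReal (exp (-W (a • x + b • z, y))) ∂ν := by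
  refine hν ha hb hab (measurable_neg_slice hW hx).exp.ennreal_ofReal
    (measurable_neg_slice hW hz).exp.ennreal_ofReal
    (measurable_neg_slice hW (hs hx hz ha.le hb.le hab)).exp.ennreal_ofReal fun y y' ↦ ?_
  have hconv := hW.2 (mk_mem_prod hx (mem_univ y)) (mk_mem_prod hz (mem_univ y')) ha.le hb.le hab
  rw [ENNReal.ofReal_rpow_of_pos (exp_pos _), ENNReal.ofReal_rpow_of_pos (exp_pos _),
    ← exp_mul, ← exp_mul, ← ENNReal.ofReal_mul (exp_pos _).le, ← exp_add]
  gcongr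
  simp only [Prod.smul_mk, Prod.mk_add_mk, smul_eq_mul] at hconv
  linarith

lemma lintegral_ofReal_exp_ne_zero {α : Type*} [MeasurableSpace α] {μ : Measure α} [NeZero μ]
    {g : α → ℝ} (hg : Measurable g) : ∫⁻ y, .ofReal (exp (g y)) ∂μ ≠ 0 := by
  rw [Ne, lintegral_eq_zero_iff hg.exp.ennreal_ofReal]
  intro h
  obtain ⟨y, hy⟩ := h.exists
  exact (ENNReal.ofReal_pos.2 (exp_pos (g y))).ne' hy

theorem PrekopaLeindler.integrable_exp_neg_slice [NeZero ν] [TopologicalSpace E]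
    [IsTopologicalAddGroup E] [ContinuousSMul ℝ E] (hν : PrekopaLeindler ν)
    (hW : ConvexOn ℝ (s ×ˢ univ) W) (hs : Convex ℝ s) (hs_open : IsOpen s) (hx : x ∈ s)
    (hint : Integrable (fun y ↦ exp (-W (x, y))) ν) (hz : z ∈ s) :
    Integrable (fun y ↦ exp (-W (z, y))) ν := by
  -- Prolong the segment from `z` to `x` a little beyond `x` inside `s`: by log-concavity and the
  -- positive mass at the far end, an infinite mass at `z` would give an infinite mass at `x`.
  obtain ⟨r, hr : 1 < r, hw : AffineMap.lineMap z x r ∈ s⟩ :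
      ∃ r ∈ Ioi (1 : ℝ), AffineMap.lineMap z x r ∈ s := by
    have hline : Tendsto (AffineMap.lineMap z x) (𝓝[>] (1 : ℝ)) (𝓝 x) := by
      simpa using (AffineMap.lineMap_continuous (p := z) (q := x)).continuousWithinAt
        (x := (1 : ℝ)) (s := Ioi 1) |>.tendsto
    exact (eventually_mem_nhdsWithin.and (hline.eventually (hs_open.mem_nhds hx))).exists
  have hr_inv : 0 < 1 - r⁻¹ := sub_pos.2 (inv_lt_one_of_one_lt₀ hr)
  have hx_eq : (1 - r⁻¹) • z + r⁻¹ • AffineMap.lineMap z x r = x := by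
    rw [← AffineMap.lineMap_apply_module, AffineMap.lineMap_lineMap_right,
      inv_mul_cancel₀ (one_pos.trans hr).ne', AffineMap.lineMap_apply_one]
  have hPL := hν.lintegral_exp_neg_rpow_mul_le hW hs hz hw hr_inv
    (inv_pos.2 (one_pos.trans hr)) (by ring)
  rw [hx_eq] at hPL
  rw [← lintegral_ofReal_ne_top_iff_integrable
    (measurable_neg_slice hW hz).exp.aestronglyMeasurable (ae_of_all _ fun _ ↦ (exp_pos _).le)]
  intro hz_top
  have hw_ne_zero := lintegral_ofReal_exp_ne_zero (μ := ν) (measurable_neg_slice hW hw)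
  rw [hz_top, ENNReal.top_rpow_of_pos hr_inv, ENNReal.top_mul
    (by simp [hw_ne_zero, (one_pos.trans hr).le]), top_le_iff] at hPL
  exact hint.lintegral_lt_top.ne hPL

theorem PrekopaLeindler.convexOn_marginalPotential [NeZero ν] (hν : PrekopaLeindler ν)
    (hW : ConvexOn ℝ (s ×ˢ univ) W) (hs : Convex ℝ s)
    (hint : ∀ x ∈ s, Integrable (fun y ↦ exp (-W (x, y))) ν) :
    ConvexOn ℝ s (marginalPotential ν W) := by
  have hpos (x : E) (hx : x ∈ s) : 0 < ∫ y, exp (-W (x, y)) ∂ν := integral_exp_pos (hint x hx)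
  refine convexOn_iff_forall_pos.2 ⟨hs, fun x hx z hz a b ha hb hab ↦ ?_⟩
  have hx' := hpos x hx
  have hz' := hpos z hz
  have hw := hs hx hz ha.le hb.le hab
  have hPL := hν.lintegral_exp_neg_rpow_mul_le hW hs hx hz ha hb hab
  simp only [← ofReal_integral_eq_lintegral_ofReal (hint _ hx) (ae_of_all _ fun _ ↦ (exp_pos _).le),
    ← ofReal_integral_eq_lintegral_ofReal (hint _ hz) (ae_of_all _ fun _ ↦ (exp_pos _).le),
    ← ofReal_integral_eq_lintegral_ofReal (hint _ hw) (ae_of_all _ fun _ ↦ (exp_pos _).le)] at hPL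
  rw [ENNReal.ofReal_rpow_of_pos hx', ENNReal.ofReal_rpow_of_pos hz', ← ENNReal.ofReal_mul
    (by positivity), ENNReal.ofReal_le_ofReal_iff (hpos _ hw).le] at hPL
  have hlog := log_le_log (by positivity) hPL
  rw [log_mul (by positivity) (by positivity), log_rpow hx', log_rpow hz'] at hlog
  simp only [marginalPotential, smul_eq_mul]
  linarith

end Prekopa

lemma concaveOn_le_add_deriv_mul_sub {g : ℝ → ℝ} {s : Set ℝ} (hg : ConcaveOn ℝ s g) {x y g' : ℝ}
    (hx : x ∈ s) (hy : y ∈ s) (hg' : HasDerivAt g g' x) : g y ≤ g x + g' * (y - x) := by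
  rcases lt_trichotomy x y with hxy | rfl | hyx
  · have h := hg.slope_le_of_hasDerivAt hx hy hxy hg'
    rw [slope_def_field, div_le_iff₀ (sub_pos.2 hxy)] at h
    linarith
  · simp
  · have h := hg.le_slope_of_hasDerivAt hy hx hyx hg'
    rw [slope_def_field, le_div_iff₀ (sub_pos.2 hyx)] at h
    linarith

lemma convexOn_perspective {E : Type*} [AddCommGroup E] [Module ℝ E] {V : E → ℝ}
    (hV : ConvexOn ℝ univ V) :
    ConvexOn ℝ (Ioi (0 : ℝ) ×ˢ univ) fun p : ℝ × E ↦ p.1 * V (p.1⁻¹ • p.2) := by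
  refine convexOn_iff_forall_pos.2 ⟨(convex_Ioi 0).prod convex_univ, ?_⟩
  rintro ⟨α, x⟩ ⟨hα : 0 < α, -⟩ ⟨β, y⟩ ⟨hβ : 0 < β, -⟩ a b ha hb -
  have : 0 < a * α + b * β := by positivity
  have hconv := @hV.2 (α⁻¹ • x) (mem_univ _) (β⁻¹ • y) (mem_univ _) (a * α / (a * α + b * β))
    (b * β / (a * α + b * β)) (by positivity) (by positivity) (by field_simp)
  have hpoint : (a * α / (a * α + b * β)) • α⁻¹ • x + (b * β / (a * α + b * β)) • β⁻¹ • y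
      = (a * α + b * β)⁻¹ • (a • x + b • y) := by
    simp only [smul_smul, smul_add]
    congr 2 <;> field_simp
  rw [hpoint] at hconv
  simp only [Prod.smul_mk, Prod.mk_add_mk, smul_eq_mul] at hconv ⊢
  calc (a * α + b * β) * V ((a * α + b * β)⁻¹ • (a • x + b • y))
      ≤ (a * α + b * β) * (a * α / (a * α + b * β) * V (α⁻¹ • x)
          + b * β / (a * α + b * β) * V (β⁻¹ • y)) := by gcongr
    _ = a * (α * V (α⁻¹ • x)) + b * (β * V (β⁻¹ • y)) := by field_simp

section Varentropy

variable {E : Type*} [NormedAddCommGroup E] [NormedSpace ℝ E] [FiniteDimensional ℝ E]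
  [MeasurableSpace E] [BorelSpace E] {ν : Measure E} [ν.IsAddHaarMeasure] {V : E → ℝ}

lemma integrable_exp_neg_perspective (hV : ConvexOn ℝ univ V)
    (hint : Integrable (fun x ↦ exp (-V x)) ν) {α : ℝ} (hα : 0 < α) :
    Integrable (fun x ↦ exp (-(α * V (α⁻¹ • x)))) ν :=
  (PrekopaLeindler.of_isAddHaarMeasure ν).integrable_exp_neg_slice (convexOn_perspective hV)
    (convex_Ioi 0) isOpen_Ioi (x := 1) (mem_Ioi.2 one_pos) (by simpa using hint) hα

lemma Iio_zero_subset_integrableExpSet (hV : ConvexOn ℝ univ V)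
    (hint : Integrable (fun x ↦ exp (-V x)) ν) : Iio 0 ⊆ integrableExpSet V ν := by
  intro t (ht : t < 0)
  have ht' : 0 < -t := neg_pos.2 ht
  have h := integrable_exp_neg_perspective hV hint ht'
  simpa [integrableExpSet] using (integrable_comp_smul_iff ν (fun x ↦ exp (-(-t * V x)))
    (inv_ne_zero ht'.ne')).1 h

lemma marginalPotential_perspective (hV : ConvexOn ℝ univ V)
    (hint : Integrable (fun x ↦ exp (-V x)) ν) {α : ℝ} (hα : 0 < α) :
    marginalPotential ν (fun p : ℝ × E ↦ p.1 * V (p.1⁻¹ • p.2)) α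
      = -(finrank ℝ E * log α + cgf V ν (-α)) := by
  have hmgf : 0 < mgf V ν (-α) :=
    mgf_pos' (NeZero.ne ν) (Iio_zero_subset_integrableExpSet hV hint (neg_neg_iff_pos.2 hα))
  have hscale := Measure.integral_comp_inv_smul_of_nonneg ν (fun x ↦ exp (-(α * V x))) hα.le
  have hmgf_eq : ∫ x, exp (-(α * V x)) ∂ν = mgf V ν (-α) := by simp [mgf]
  rw [marginalPotential, hscale, hmgf_eq, smul_eq_mul, log_mul (by positivity) hmgf.ne', log_pow,
    cgf]

theorem concaveOn_finrank_mul_log_add_cgf_neg (hV : ConvexOn ℝ univ V)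
    (hint : Integrable (fun x ↦ exp (-V x)) ν) :
    ConcaveOn ℝ (Ioi 0) fun α ↦ finrank ℝ E * log α + cgf V ν (-α) := by
  have hconv := (PrekopaLeindler.of_isAddHaarMeasure ν).convexOn_marginalPotential
    (convexOn_perspective hV) (convex_Ioi 0) fun α hα ↦ integrable_exp_neg_perspective hV hint hα
  refine neg_convexOn_iff.1 (hconv.congr fun α hα ↦ ?_)
  exact marginalPotential_perspective hV hint hα

lemma interior_integrableExpSet_neg_one (hV : ConvexOn ℝ univ V)
    (hint : Integrable (fun x ↦ exp (-V x)) ν) : -1 ∈ interior (integrableExpSet V ν) :=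
  interior_mono (Iio_zero_subset_integrableExpSet hV hint) (by simp)

lemma integrable_tilted_neg (hV : ConvexOn ℝ univ V) (hint : Integrable (fun x ↦ exp (-V x)) ν) :
    Integrable V (ν.tilted fun x ↦ -V x) := by
  simpa using memLp_one_iff_integrable.1
    (memLp_tilted_mul (interior_integrableExpSet_neg_one hV hint) 1)

lemma integrable_exp_mul_tilted_neg (hV : ConvexOn ℝ univ V)
    (hint : Integrable (fun x ↦ exp (-V x)) ν) {β : ℝ} (hβ : β < 1) :
    Integrable (fun x ↦ exp (β * V x)) (ν.tilted fun x ↦ -V x) := by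
  have h : Integrable (fun x ↦ exp ((β - 1) * V x)) ν :=
    Iio_zero_subset_integrableExpSet hV hint (sub_neg.2 hβ)
  rw [integrable_tilted_iff hint]
  refine h.congr (ae_of_all _ fun x ↦ ?_)
  simp only [smul_eq_mul, ← exp_add]
  ring_nf

lemma cgf_tilted_neg (hV : ConvexOn ℝ univ V) (hint : Integrable (fun x ↦ exp (-V x)) ν) {β : ℝ}
    (hβ : β < 1) :
    cgf V (ν.tilted fun x ↦ -V x) β = cgf V ν (β - 1) - cgf V ν (-1) := by
  have mgf_ne_zero {t : ℝ} (ht : t < 0) : mgf V ν t ≠ 0 :=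
    (mgf_pos' (NeZero.ne ν) (Iio_zero_subset_integrableExpSet hV hint ht)).ne'
  have hmgf : mgf V (ν.tilted fun x ↦ -V x) β = mgf V ν (β - 1) / mgf V ν (-1) := by
    have hexponent : (fun x ↦ -V x) + (fun x ↦ β * V x) = fun x ↦ (β - 1) * V x := by
      ext x
      simp only [Pi.add_apply]
      ring
    simp only [mgf, integral_exp_tilted, hexponent, neg_one_mul]
  rw [cgf, hmgf, log_div (mgf_ne_zero (sub_neg.2 hβ)) (mgf_ne_zero (by norm_num)), cgf, cgf]

theorem cgf_tilted_neg_le (hV : ConvexOn ℝ univ V)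
    (hint : Integrable (fun x ↦ exp (-V x)) ν) {β : ℝ} (hβ : β < 1) :
    cgf V (ν.tilted fun x ↦ -V x) β
      ≤ β * (ν.tilted fun x ↦ -V x)[V] - finrank ℝ E * (β + log (1 - β)) := by
  have hmean : (ν.tilted fun x ↦ -V x)[V] = deriv (cgf V ν) (-1) := by
    simpa using integral_tilted_mul_self (interior_integrableExpSet_neg_one hV hint)
  have hcgf : HasDerivAt (cgf V ν) (deriv (cgf V ν) (-1)) (-1) :=
    (analyticAt_cgf (interior_integrableExpSet_neg_one hV hint)).differentiableAt.hasDerivAt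
  have hderiv : HasDerivAt (fun α ↦ finrank ℝ E * log α + cgf V ν (-α))
      (finrank ℝ E - deriv (cgf V ν) (-1)) 1 := by
    exact (((hasDerivAt_log one_ne_zero).const_mul (finrank ℝ E : ℝ)).add
      (hcgf.comp 1 (hasDerivAt_neg 1))).congr_deriv (by simp [sub_eq_add_neg])
  have htangent := concaveOn_le_add_deriv_mul_sub (concaveOn_finrank_mul_log_add_cgf_neg hV hint)
    (mem_Ioi.2 one_pos) (mem_Ioi.2 (sub_pos.2 hβ)) hderiv
  rw [cgf_tilted_neg hV hint hβ, hmean]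
  simp only [log_one, neg_sub] at htangent
  linarith

lemma neg_add_log_one_sub_le {β : ℝ} (hβ : β ≤ 1 / 2) : -(β + log (1 - β)) ≤ 2 * β ^ 2 := by
  have hpos : 0 < 1 - β := by linarith
  calc -(β + log (1 - β)) ≤ -(β + (1 - (1 - β)⁻¹)) := by
        gcongr
        exact one_sub_inv_le_log_of_pos hpos
    _ = β ^ 2 / (1 - β) := by
        field_simp
        ring
    _ ≤ 2 * β ^ 2 := by
        rw [div_le_iff₀ hpos]
        nlinarith [sq_nonneg β]

theorem mgf_sub_integral_tilted_neg_le (hV : ConvexOn ℝ univ V)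
    (hint : Integrable (fun x ↦ exp (-V x)) ν) {β : ℝ} (hβ : β ≤ 1 / 2) :
    mgf (fun x ↦ V x - (ν.tilted fun x ↦ -V x)[V]) (ν.tilted fun x ↦ -V x) β
      ≤ exp (2 * finrank ℝ E * β ^ 2) := by
  have hβ₁ : β < 1 := by linarith
  have := isProbabilityMeasure_tilted hint
  simp only [sub_eq_add_neg, mgf_add_const]
  rw [← exp_cgf (integrable_exp_mul_tilted_neg hV hint hβ₁), ← exp_add, exp_le_exp]
  linarith [cgf_tilted_neg_le hV hint hβ₁,
    mul_le_mul_of_nonneg_left (neg_add_log_one_sub_le hβ) (finrank ℝ E).cast_nonneg (α := ℝ)]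

end Varentropy

lemma measureReal_lt_abs_le_of_mgf_le {Ω : Type*} [MeasurableSpace Ω] {P : Measure Ω}
    [IsFiniteMeasure P] {X : Ω → ℝ} {b c t : ℝ} (hb : 0 < b) (hc : 0 < c)
    (hint : ∀ β, |β| ≤ b → Integrable (fun ω ↦ exp (β * X ω)) P)
    (hmgf : ∀ β, |β| ≤ b → mgf X P β ≤ exp (c * β ^ 2)) (ht : 0 ≤ t) :
    P.real {ω | t < |X ω|} ≤ 2 * exp (-min (b * t / 2) (t ^ 2 / (4 * c))) := by
  set β := min b (t / (2 * c))
  have hβ₀ : 0 ≤ β := by positivity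
  have hβ : |β| ≤ b := (abs_of_nonneg hβ₀).trans_le (min_le_left _ _)
  have hexponent : -β * t + c * β ^ 2 ≤ -min (b * t / 2) (t ^ 2 / (4 * c)) := by
    have hcβ : β * (c * β) ≤ β * (t / 2) := by
      gcongr
      calc c * β ≤ c * (t / (2 * c)) := by gcongr; exact min_le_right _ _
        _ = t / 2 := by field_simp
    have hmin : min (b * t / 2) (t ^ 2 / (4 * c)) = β * (t / 2) := by
      rw [min_mul_of_nonneg _ _ (by positivity)]
      congr 1 <;> field_simp
      ring
    linarith
  have hright : P.real {ω | t ≤ X ω} ≤ exp (-min (b * t / 2) (t ^ 2 / (4 * c))) :=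
    calc P.real {ω | t ≤ X ω} ≤ exp (-β * t) * mgf X P β :=
          measure_ge_le_exp_mul_mgf t hβ₀ (hint β hβ)
      _ ≤ exp (-β * t) * exp (c * β ^ 2) := by gcongr; exact hmgf β hβ
      _ ≤ exp (-min (b * t / 2) (t ^ 2 / (4 * c))) := by rwa [← exp_add, exp_le_exp]
  have hleft : P.real {ω | X ω ≤ -t} ≤ exp (-min (b * t / 2) (t ^ 2 / (4 * c))) := by
    have hβ' : |-β| ≤ b := (abs_neg β).trans_le hβ
    calc P.real {ω | X ω ≤ -t} ≤ exp (- -β * -t) * mgf X P (-β) :=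
          measure_le_le_exp_mul_mgf (-t) (neg_nonpos.2 hβ₀) (hint _ hβ')
      _ ≤ exp (- -β * -t) * exp (c * (-β) ^ 2) := by gcongr; exact hmgf _ hβ'
      _ ≤ exp (-min (b * t / 2) (t ^ 2 / (4 * c))) := by
          rw [← exp_add, exp_le_exp]
          linarith
  calc P.real {ω | t < |X ω|}
      ≤ P.real ({ω | t ≤ X ω} ∪ {ω | X ω ≤ -t}) := by
        refine measureReal_mono fun ω (hω : t < |X ω|) ↦ ?_
        rcases lt_abs.1 hω with h | h
        · exact .inl h.le
        · exact .inr (le_neg_of_le_neg h.le)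
    _ ≤ _ := measureReal_union_le _ _
    _ ≤ 2 * exp (-min (b * t / 2) (t ^ 2 / (4 * c))) := by linarith

section HasLaw

variable {E Ω : Type*} [NormedAddCommGroup E] [NormedSpace ℝ E] [FiniteDimensional ℝ E]
  [MeasurableSpace E] [BorelSpace E] {ν : Measure E} [ν.IsAddHaarMeasure] {V : E → ℝ}
  [MeasurableSpace Ω] {P : Measure Ω} {X : Ω → E}

lemma integrable_comp_of_hasLaw_tilted_neg (hX : HasLaw X (ν.tilted fun x ↦ -V x) P)
    (hV : ConvexOn ℝ univ V) (hint : Integrable (fun x ↦ exp (-V x)) ν) :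
    Integrable (fun ω ↦ V (X ω)) P :=
  (hX.map_eq ▸ integrable_tilted_neg hV hint).comp_aemeasurable hX.aemeasurable

theorem measureReal_lt_abs_sub_integral_le (hX : HasLaw X (ν.tilted fun x ↦ -V x) P)
    (hV : ConvexOn ℝ univ V) (hint : Integrable (fun x ↦ exp (-V x)) ν) {n t : ℝ} (hn : 0 < n)
    (hdim : finrank ℝ E ≤ n) (ht : 0 ≤ t) :
    P.real {ω | t < |V (X ω) - ∫ ω, V (X ω) ∂P|} ≤ 2 * exp (-min (t / 4) (t ^ 2 / (8 * n))) := by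
  have hVm := measurable_of_convexOn_univ hV
  have := isProbabilityMeasure_tilted hint
  set m := (ν.tilted fun x ↦ -V x)[V]
  have hmean : ∫ ω, V (X ω) ∂P = m := hX.integral_comp hVm.aestronglyMeasurable
  have hset : MeasurableSet {x | t < |V x - m|} :=
    measurableSet_lt measurable_const (hVm.sub_const m).abs
  have hexp (β : ℝ) (hβ : |β| ≤ 1 / 2) :
      Integrable (fun x ↦ exp (β * (V x - m))) (ν.tilted fun x ↦ -V x) := by
    have hβ₁ : β < 1 := by linarith [le_abs_self β]
    simpa [mul_sub, exp_sub] using (integrable_exp_mul_tilted_neg hV hint hβ₁).div_const _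
  have hmgf (β : ℝ) (hβ : |β| ≤ 1 / 2) :
      mgf (fun x ↦ V x - m) (ν.tilted fun x ↦ -V x) β ≤ exp (2 * n * β ^ 2) :=
    (mgf_sub_integral_tilted_neg_le hV hint ((le_abs_self β).trans hβ)).trans (by gcongr)
  rw [hmean, hX.measureReal_eq hset]
  have htail := measureReal_lt_abs_le_of_mgf_le one_half_pos (by positivity) hexp hmgf ht
  rwa [show 1 / 2 * t / 2 = t / 4 by ring, show 4 * (2 * n) = 8 * n by ring] at htail

end HasLaw

lemma measureReal_lt_abs_sub_sub_sub_integral_le {Ω : Type*} [MeasurableSpace Ω] {P : Measure Ω}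
    [IsFiniteMeasure P] {A B C : Ω → ℝ} (hA : Integrable A P) (hB : Integrable B P)
    (hC : Integrable C P) (t : ℝ) :
    P.real {ω | t < |A ω - B ω - C ω - ∫ ω, (A ω - B ω - C ω) ∂P|}
      ≤ P.real {ω | t / 3 < |A ω - ∫ ω, A ω ∂P|} + P.real {ω | t / 3 < |B ω - ∫ ω, B ω ∂P|}
        + P.real {ω | t / 3 < |C ω - ∫ ω, C ω ∂P|} := by
  have hAB : Integrable (fun ω ↦ A ω - B ω) P := hA.sub hB
  rw [integral_sub hAB hC, integral_sub hA hB]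
  set a := ∫ ω, A ω ∂P
  set b := ∫ ω, B ω ∂P
  set c := ∫ ω, C ω ∂P
  refine (measureReal_mono fun ω (hω : t < |A ω - B ω - C ω - (a - b - c)|) ↦ ?_).trans
    ((measureReal_union_le _ {ω | t / 3 < |C ω - c|}).trans
      (add_le_add_left (measureReal_union_le {ω | t / 3 < |A ω - a|} {ω | t / 3 < |B ω - b|}) _))
  by_contra! h
  simp only [mem_union, mem_ofPred_eq, not_or, not_lt] at h
  rw [show A ω - B ω - C ω - (a - b - c) = A ω - a - (B ω - b) - (C ω - c) by ring] at hω
  linarith [abs_sub (A ω - a - (B ω - b)) (C ω - c), abs_sub (A ω - a) (B ω - b)]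

lemma exp_neg_marginalPotential {α β : Type*} [MeasurableSpace β] {ν : Measure β} [NeZero ν]
    {W : α × β → ℝ} {x : α} (hx : Integrable (fun y ↦ exp (-W (x, y))) ν) :
    exp (-marginalPotential ν W x) = ∫ y, exp (-W (x, y)) ∂ν := by
  rw [marginalPotential, neg_neg, exp_log (integral_exp_pos hx)]

lemma measurePreserving_tilted {α β : Type*} [MeasurableSpace α] [MeasurableSpace β]
    {μ : Measure α} {ν : Measure β} {φ : α ≃ᵐ β} (hφ : MeasurePreserving φ μ ν) (g : β → ℝ) :
    MeasurePreserving φ (μ.tilted (g ∘ φ)) (ν.tilted g) := by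
  refine ⟨φ.measurable, Measure.ext fun s hs ↦ ?_⟩
  rw [Measure.map_apply φ.measurable hs, tilted_apply' _ _ (φ.measurable hs),
    tilted_apply' _ _ hs, ← hφ.integral_comp' fun y ↦ exp (g y),
    ← hφ.setLIntegral_comp_preimage_emb φ.measurableEmbedding]
  rfl

section Marginal

variable {α β : Type*} [MeasurableSpace α] [MeasurableSpace β] {μ : Measure α} {ν : Measure β}
  [SFinite μ] [SFinite ν] {W : α × β → ℝ}

lemma ae_exp_neg_marginalPotential_eq [NeZero ν]
    (hint : Integrable (fun p ↦ exp (-W p)) (μ.prod ν)) :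
    (fun x ↦ exp (-marginalPotential ν W x)) =ᵐ[μ] fun x ↦ ∫ y, exp (-W (x, y)) ∂ν := by
  filter_upwards [hint.prod_right_ae] with x hx using exp_neg_marginalPotential hx

lemma integrable_exp_neg_marginalPotential [NeZero ν]
    (hint : Integrable (fun p ↦ exp (-W p)) (μ.prod ν)) :
    Integrable (fun x ↦ exp (-marginalPotential ν W x)) μ :=
  hint.integral_prod_left.congr (ae_exp_neg_marginalPotential_eq hint).symm

theorem hasLaw_fst_tilted_neg [NeZero ν] (hint : Integrable (fun p ↦ exp (-W p)) (μ.prod ν)) :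
    HasLaw Prod.fst (μ.tilted fun x ↦ -marginalPotential ν W x)
      ((μ.prod ν).tilted fun p ↦ -W p) := by
  have hmarginal := ae_exp_neg_marginalPotential_eq hint
  refine ⟨measurable_fst.aemeasurable, Measure.ext fun s hs ↦ ?_⟩
  have hcylinder : (μ.prod ν).restrict (Prod.fst ⁻¹' s) = (μ.restrict s).prod ν := by
    rw [← prod_univ, ← Measure.prod_restrict, Measure.restrict_univ]
  rw [Measure.map_apply measurable_fst hs, tilted_apply_eq_ofReal_integral _ _,
    tilted_apply_eq_ofReal_integral _ _, integral_congr_ae hmarginal, ← integral_prod _ hint,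
    hcylinder, integral_prod _ (hcylinder ▸ (hint.div_const _).restrict)]
  congr 1
  refine integral_congr_ae ?_
  filter_upwards [ae_restrict_of_ae hmarginal] with x hx
  rw [integral_div, hx]

theorem hasLaw_snd_tilted_neg [NeZero μ] (hint : Integrable (fun p ↦ exp (-W p)) (μ.prod ν)) :
    HasLaw Prod.snd (ν.tilted fun y ↦ -marginalPotential μ (W ∘ Prod.swap) y)
      ((μ.prod ν).tilted fun p ↦ -W p) :=
  (hasLaw_fst_tilted_neg (W := W ∘ Prod.swap) hint.swap).comp
    (measurePreserving_tilted (φ := .prodComm) Measure.measurePreserving_swap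
      fun p ↦ -W p.swap).hasLaw

end Marginal

/-- The information density `-log (f(x, y) / (f(x) f(y)))` of the joint density `f = exp (-W)`
with respect to the product measure `μ.prod ν`. -/
noncomputable def infoDensity {α β : Type*} [MeasurableSpace α] [MeasurableSpace β]
    (μ : Measure α) (ν : Measure β) (W : α × β → ℝ) (p : α × β) : ℝ :=
  -log (exp (-W p) / ((∫ y, exp (-W (p.1, y)) ∂ν) * ∫ x, exp (-W (x, p.2)) ∂μ))

lemma infoDensity_eq {α β : Type*} [MeasurableSpace α] [MeasurableSpace β] {μ : Measure α}
    {ν : Measure β} [NeZero μ] [NeZero ν] {W : α × β → ℝ} {p : α × β}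
    (hfst : Integrable (fun y ↦ exp (-W (p.1, y))) ν)
    (hsnd : Integrable (fun x ↦ exp (-W (x, p.2))) μ) :
    infoDensity μ ν W p
      = W p - marginalPotential ν W p.1 - marginalPotential μ (W ∘ Prod.swap) p.2 := by
  have hfst_pos := integral_exp_pos hfst
  have hsnd_pos := integral_exp_pos hsnd
  rw [infoDensity, log_div (exp_pos _).ne' (by positivity), log_mul hfst_pos.ne' hsnd_pos.ne',
    log_exp]
  simp only [marginalPotential, Function.comp_apply, Prod.swap_prod_mk]
  ring

section InfoDensity

variable {E F : Type*} [NormedAddCommGroup E] [NormedSpace ℝ E] [MeasurableSpace E]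
  [NormedAddCommGroup F] [NormedSpace ℝ F] [FiniteDimensional ℝ F] [MeasurableSpace F]
  [BorelSpace F] {μ : Measure E} {ν : Measure F} [ν.IsAddHaarMeasure] {W : E × F → ℝ}

lemma integrable_exp_neg_slice_of_integrable_prod [SFinite μ] [NeZero μ]
    (hW : ConvexOn ℝ univ W) (hint : Integrable (fun p ↦ exp (-W p)) (μ.prod ν)) (x : E) :
    Integrable (fun y ↦ exp (-W (x, y))) ν := by
  obtain ⟨x₀, hx₀⟩ := hint.prod_right_ae.exists
  exact (PrekopaLeindler.of_isAddHaarMeasure ν).integrable_exp_neg_slice (s := univ)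
    (univ_prod_univ.symm ▸ hW) convex_univ isOpen_univ (mem_univ x₀) hx₀ (mem_univ x)

lemma convexOn_univ_marginalPotential [SFinite μ] [NeZero μ] (hW : ConvexOn ℝ univ W)
    (hint : Integrable (fun p ↦ exp (-W p)) (μ.prod ν)) :
    ConvexOn ℝ univ (marginalPotential ν W) :=
  (PrekopaLeindler.of_isAddHaarMeasure ν).convexOn_marginalPotential (univ_prod_univ.symm ▸ hW)
    convex_univ fun x _ ↦ integrable_exp_neg_slice_of_integrable_prod hW hint x

variable [FiniteDimensional ℝ E] [BorelSpace E] [μ.IsAddHaarMeasure]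

lemma infoDensity_eq_sub_marginalPotential (hW : ConvexOn ℝ univ W)
    (hint : Integrable (fun p ↦ exp (-W p)) (μ.prod ν)) :
    infoDensity μ ν W = fun p ↦
      W p - marginalPotential ν W p.1 - marginalPotential μ (W ∘ Prod.swap) p.2 :=
  funext fun p ↦ infoDensity_eq (integrable_exp_neg_slice_of_integrable_prod hW hint p.1)
    (integrable_exp_neg_slice_of_integrable_prod
      (hW.comp_linearMap (LinearEquiv.prodComm ℝ F E).toLinearMap) hint.swap p.2)

theorem measureReal_lt_abs_infoDensity_sub_integral_le (hW : ConvexOn ℝ univ W)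
    (hint : Integrable (fun p ↦ exp (-W p)) (μ.prod ν)) {Ω : Type*} [MeasurableSpace Ω]
    {P : Measure Ω} {Z : Ω → E × F} (hZ : HasLaw Z ((μ.prod ν).tilted fun p ↦ -W p) P) {n t : ℝ}
    (hn : 0 < n) (hdim : finrank ℝ E + finrank ℝ F ≤ n) (ht : 0 ≤ t) :
    P.real {ω | t < |infoDensity μ ν W (Z ω) - ∫ ω, infoDensity μ ν W (Z ω) ∂P|}
      ≤ 6 * exp (-min (t / 12) (t ^ 2 / (72 * n))) := by
  have hX := (hasLaw_fst_tilted_neg hint).comp hZ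
  have hY := (hasLaw_snd_tilted_neg hint).comp hZ
  have hU := convexOn_univ_marginalPotential hW hint
  have hV := convexOn_univ_marginalPotential
    (hW.comp_linearMap (LinearEquiv.prodComm ℝ F E).toLinearMap) hint.swap
  have hU_int := integrable_exp_neg_marginalPotential hint
  have hV_int := integrable_exp_neg_marginalPotential hint.swap
  have := isProbabilityMeasure_tilted hint
  have := hZ.isProbabilityMeasure
  have ht₃ : 0 ≤ t / 3 := by positivity
  have hW_tail := measureReal_lt_abs_sub_integral_le hZ hW hint hn
    (by rwa [finrank_prod, Nat.cast_add]) ht₃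
  have hU_tail := measureReal_lt_abs_sub_integral_le hX hU hU_int hn
    ((le_add_of_nonneg_right (Nat.cast_nonneg _)).trans hdim) ht₃
  have hV_tail := measureReal_lt_abs_sub_integral_le hY hV hV_int hn
    ((le_add_of_nonneg_left (Nat.cast_nonneg _)).trans hdim) ht₃
  have hunion := measureReal_lt_abs_sub_sub_sub_integral_le
    (integrable_comp_of_hasLaw_tilted_neg hZ hW hint)
    (integrable_comp_of_hasLaw_tilted_neg hX hU hU_int)
    (integrable_comp_of_hasLaw_tilted_neg hY hV hV_int) t
  rw [infoDensity_eq_sub_marginalPotential hW hint]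
  refine hunion.trans ((add_le_add_three hW_tail hU_tail hV_tail).trans_eq ?_)
  rw [show t / 3 / 4 = t / 12 by ring, show (t / 3) ^ 2 / (8 * n) = t ^ 2 / (72 * n) by
    field_simp; ring]
  ring

theorem information_density_concentration_general (hW : ConvexOn ℝ univ W)
    (hint : ∫ p, exp (-W p) ∂μ.prod ν = 1) {Ω : Type*} [MeasurableSpace Ω] {P : Measure Ω}
    {Z : Ω → E × F} (hZ : HasLaw Z ((μ.prod ν).withDensity fun p ↦ .ofReal (exp (-W p))) P)
    {d t : ℝ} (hd : 0 < d) (hdim : finrank ℝ E + finrank ℝ F ≤ 2 * d) (ht : 0 ≤ t) :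
    P {ω | t < |infoDensity μ ν W (Z ω) - ∫ ω, infoDensity μ ν W (Z ω) ∂P|}
      ≤ .ofReal (6 * exp (-(1 / 144) * min t (t ^ 2 / d))) := by
  have hlaw : HasLaw Z ((μ.prod ν).tilted fun p ↦ -W p) P := by
    simpa [Measure.tilted, hint] using hZ
  have hintegrable := integrable_of_integral_eq_one hint
  have := isProbabilityMeasure_tilted hintegrable
  have := hlaw.isProbabilityMeasure
  rw [← ofReal_measureReal]
  refine ENNReal.ofReal_le_ofReal <| (measureReal_lt_abs_infoDensity_sub_integral_le hW hintegrable
    hlaw (by positivity) hdim ht).trans ?_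
  gcongr
  rw [neg_mul, neg_le_neg_iff, mul_min_of_nonneg _ _ (by norm_num)]
  gcongr
  · linarith
  · exact le_of_eq (by field_simp; ring)

end InfoDensity

/-- There are universal constants `c₁, c₂ > 0` such that for every dimension
`d`, every log-concave joint density `f(x,y) = e^{-W(x,y)}` on `ℝ^d × ℝ^d` (with `W` convex and
`∫ e^{-W} = 1`), the information density `-log (f(X,Y) / (f(X) f(Y)))` concentrates around the
mutual information: `P(|-log (f(X,Y)/(f(X)f(Y))) - I(X;Y)| > t) ≤
3 c₁ exp(-(c₂/3) min(t, t²/d))` for all `t ≥ 0`. -/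
theorem information_density_concentration :
    ∃ c₁ c₂ : ℝ, 0 < c₁ ∧ 0 < c₂ ∧
      ∀ (d : ℕ), 0 < d →
      ∀ (W : EuclideanSpace ℝ (Fin d) × EuclideanSpace ℝ (Fin d) → ℝ),
        ConvexOn ℝ Set.univ W →
        (∫ p, Real.exp (-W p)) = 1 →
      ∀ (μ : Measure (EuclideanSpace ℝ (Fin d) × EuclideanSpace ℝ (Fin d))),
        μ = volume.withDensity (fun p => ENNReal.ofReal (Real.exp (-W p))) →
      ∀ (fX fY : EuclideanSpace ℝ (Fin d) → ℝ),
        (∀ x, fX x = ∫ y, Real.exp (-W (x, y))) →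
        (∀ y, fY y = ∫ x, Real.exp (-W (x, y))) →
      ∀ (ic : EuclideanSpace ℝ (Fin d) × EuclideanSpace ℝ (Fin d) → ℝ),
        (∀ p, ic p = -Real.log (Real.exp (-W p) / (fX p.1 * fY p.2))) →
      ∀ t : ℝ, 0 ≤ t →
        μ {p | t < |ic p - ∫ q, ic q ∂μ|}
          ≤ ENNReal.ofReal (3 * c₁ * Real.exp (-(c₂ / 3) * min t (t ^ 2 / d))) := by
  refine ⟨2, 1 / 48, two_pos, by norm_num, ?_⟩
  rintro d hd W hW hint _ rfl fX fY hfX hfY ic hic t ht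
  obtain rfl := funext hfX
  obtain rfl := funext hfY
  obtain rfl := funext hic
  exact (information_density_concentration_general hW hint .id (Nat.cast_pos.2 hd)
    (by simp [two_mul]) ht).trans_eq (by norm_num)
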